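/- Let n ≥ 2 be an integer and let F : ℝ → ℝ be continuous. Let v : [0,1] → ℝ be continuously differentiable on [0,1] and twice continuously differentiable on (0,1), with v'(0) = 0 and v''(r) + ((n−1)/r) v'(r) = F(v(r)) for all r ∈ (0,1). If F(v(r)) ≥ 0 for all r ∈ (0,1), then v'(r) ≥ 0 for all r ∈ [0,1]; in particular v is nondecreasing on [0,1]. -/

import Mathlib

/-!
Multiplying the equation by the integrating factor `r ^ (n - 1)` turns it into
`(r ^ (n - 1) * v' r)' = r ^ (n - 1) * F (v r) ≥ 0`. Hence `r ^ (n - 1) * v' r` is monotone on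
`[0, 1]`; it vanishes at `0`, so it is nonnegative, and dividing by `r ^ (n - 1) > 0` gives
`v' r ≥ 0` for `r > 0`.
-/

open Set

theorem stmt_4 (n : ℕ) (hn : 2 ≤ n)
    (F : ℝ → ℝ) (hF : Continuous F)
    (v v' v'' : ℝ → ℝ)
    (hderiv1 : ∀ r ∈ Icc (0:ℝ) 1, HasDerivWithinAt v (v' r) (Icc (0:ℝ) 1) r)
    (hcont1 : ContinuousOn v' (Icc (0:ℝ) 1))
    (hderiv2 : ∀ r ∈ Ioo (0:ℝ) 1, HasDerivAt v' (v'' r) r)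
    (hcont2 : ContinuousOn v'' (Ioo (0:ℝ) 1))
    (hv'0 : v' 0 = 0)
    (hODE : ∀ r ∈ Ioo (0:ℝ) 1, v'' r + (((n : ℝ) - 1) / r) * v' r = F (v r))
    (hFpos : ∀ r ∈ Ioo (0:ℝ) 1, 0 ≤ F (v r)) :
    ∀ r ∈ Icc (0:ℝ) 1, 0 ≤ v' r := by
  obtain ⟨m, rfl⟩ : ∃ m, n = m + 2 := ⟨n - 2, by omega⟩
  -- `r ^ (m + 1) * v' r` is the flux `r ^ (n - 1) * v' r`; by the equation its derivative
  -- is `r ^ (n - 1) * F (v r) ≥ 0`.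
  have hmono : MonotoneOn (fun r : ℝ => r ^ (m + 1) * v' r) (Icc 0 1) := by
    refine monotoneOn_of_hasDerivWithinAt_nonneg (convex_Icc 0 1)
      (f' := fun r => r ^ (m + 1) * F (v r))
      ((continuous_pow _).continuousOn.mul hcont1) ?_ ?_
    · intro r hr
      rw [interior_Icc] at hr
      have hr0 : r ≠ 0 := hr.1.ne'
      have h := (hasDerivAt_pow (m + 1) r).mul (hderiv2 r hr)
      refine (h.congr_deriv ?_).hasDerivWithinAt
      rw [← hODE r hr]
      push_cast
      field_simp
      ring
    · intro r hr
      rw [interior_Icc] at hr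
      exact mul_nonneg (pow_nonneg hr.1.le _) (hFpos r hr)
  intro r hr
  rcases hr.1.eq_or_lt with rfl | hr0
  · exact hv'0.ge
  · have h := hmono (left_mem_Icc.2 zero_le_one) hr hr.1
    simp only [hv'0, mul_zero] at h
    exact nonneg_of_mul_nonneg_right h (pow_pos hr0 _)
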